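/- Let G be a group, K ≤ H ≤ G and M ≤ H subgroups. Let E ⊆ G be a set of representatives for the left H-action on S = {g ∈ G : gKg⁻¹ ≤ H}, i.e., every g₀ ∈ S lies in Hg for exactly one g ∈ E. Let γ ∈ G satisfy γKγ⁻¹ ≤ M. Then there exists a unique pair (g, Mh) consisting of an element g ∈ E and a right coset Mh with h ∈ H satisfying h(gKg⁻¹)h⁻¹ ≤ M, such that M(hg) = Mγ. The pair is characterized by Hg = Hγ and Mh = Mγg⁻¹. (Equivalently: in the orbit category Or(G), the morphism Mγ : G/K → G/M decomposes uniquely as the morphism (gKg⁻¹)g : G/K → G/(gKg⁻¹) with g ∈ E, followed by a morphism Mh : G/(gKg⁻¹) → G/M coming from the orbit category Or(H).) -/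

import Mathlib

/-- Unique decomposition of morphisms `Mγ : G/K → G/M` in the orbit category:
given `K ≤ H ≤ G`, `M ≤ H`, a set `E` of representatives for the left
`H`-action on `S = {g : gKg⁻¹ ≤ H}`, and `γ ∈ G` with `γKγ⁻¹ ≤ M`, there is a
unique pair `(g, Mh)` with `g ∈ E`, `h ∈ H`, `h(gKg⁻¹)h⁻¹ ≤ M` and
`M(hg) = Mγ`; it is characterized by `Hg = Hγ` and `Mh = Mγg⁻¹`. -/
theorem orbit_category_unique_decomposition (G : Type*) [Group G]
    (K H M : Subgroup G) (hKH : K ≤ H) (hMH : M ≤ H) (E : Set G)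
    (hE : ∀ g₀ ∈ {g : G | ∀ k ∈ K, g * k * g⁻¹ ∈ H},
      ∃! g, g ∈ E ∧ g₀ * g⁻¹ ∈ H)
    (hES : E ⊆ {g : G | ∀ k ∈ K, g * k * g⁻¹ ∈ H})
    (γ : G) (hγ : ∀ k ∈ K, γ * k * γ⁻¹ ∈ M) :
    ∃ g h : G,
      -- existence of the decomposition
      g ∈ E ∧ h ∈ H ∧ (∀ k ∈ K, h * (g * k * g⁻¹) * h⁻¹ ∈ M) ∧
      γ * (h * g)⁻¹ ∈ M ∧
      -- its characterization: `Hg = Hγ` and `Mh = Mγg⁻¹`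
      γ * g⁻¹ ∈ H ∧ h * (γ * g⁻¹)⁻¹ ∈ M ∧
      -- uniqueness of the pair `(g, Mh)`
      (∀ g' h' : G, g' ∈ E → h' ∈ H →
        (∀ k ∈ K, h' * (g' * k * g'⁻¹) * h'⁻¹ ∈ M) → γ * (h' * g')⁻¹ ∈ M →
        g' = g ∧ h' * h⁻¹ ∈ M) := by
  obtain ⟨g, ⟨hgE, hgH⟩, huniq⟩ := hE γ (fun k hk => hMH (hγ k hk))
  refine ⟨g, γ * g⁻¹, hgE, hgH, ?_, ?_, hgH, ?_, ?_⟩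
  · intro k hk
    have e : γ * g⁻¹ * (g * k * g⁻¹) * (γ * g⁻¹)⁻¹ = γ * k * γ⁻¹ := by group
    rw [e]
    exact hγ k hk
  · have e : γ * (γ * g⁻¹ * g)⁻¹ = 1 := by group
    rw [e]
    exact M.one_mem
  · rw [mul_inv_cancel]
    exact M.one_mem
  · intro g' h' hg' hh' _ hm
    have hgg : g' = g := by
      refine huniq g' ⟨hg', ?_⟩
      have e : γ * g'⁻¹ = γ * (h' * g')⁻¹ * h' := by group
      rw [e]
      exact H.mul_mem (hMH hm) hh'
    subst hgg
    refine ⟨rfl, ?_⟩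
    have e : h' * (γ * g'⁻¹)⁻¹ = (γ * (h' * g')⁻¹)⁻¹ := by group
    rw [e]
    exact M.inv_mem hm
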